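/- Let Δ ≥ 2 be an integer and let 𝒢 be the family of all claw-free graphs (graphs with no induced K_{1,3}) of maximum degree at most Δ. Then for every λ > 0 and every δ with 0 < δ < 1/(eΔ) there exists a constant C > 0 such that the hard-core measure at λ satisfies strong spatial mixing on 𝒢 with exponential rate r = 1 + √(δ/λ) and constant C. -/

import Mathlib

open Finset

noncomputable section

namespace HardCore

open scoped Classical

variable {V : Type*}

/-- `s` is an independent set in the graph `G`. -/
def IsInd (G : SimpleGraph V) (s : Finset V) : Prop :=
  ∀ u ∈ s, ∀ w ∈ s, ¬ G.Adj u w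

/-- The independence polynomial of the subgraph of `G` induced on the vertex set `A`,
evaluated at `lam`:  `Z_{G[A]}(lam) = ∑_{I ⊆ A independent} lam^{|I|}`. -/
def Z (R : Type*) [Field R] [Fintype V] (G : SimpleGraph V) (A : Finset V) (lam : R) : R :=
  ∑ s ∈ A.powerset, if IsInd G s then lam ^ s.card else 0

/-- The closed neighbourhood `N[v]` of a vertex `v` as a `Finset`. -/
def closedNbhd [Fintype V] (G : SimpleGraph V) (v : V) : Finset V :=
  univ.filter fun u => u = v ∨ G.Adj v u

/-- The ratio `P_{G[A],v}(lam) = lam * Z_{G[A] ∖ N[v]}(lam) / Z_{G[A]}(lam)` for the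
subgraph of `G` induced on `A`. -/
def ratio {R : Type*} [Field R] [Fintype V] (G : SimpleGraph V) (A : Finset V) (v : V)
    (lam : R) : R :=
  lam * Z R G (A \ closedNbhd G v) lam / Z R G A lam

/-- `σ` is a valid boundary condition on `Λ`: the set of vertices of `Λ` set to `1`
is independent in the subgraph of `G` induced by `Λ`. -/
def IsBC (G : SimpleGraph V) (Λ : Finset V) (σ : V → Bool) : Prop :=
  ∀ u ∈ Λ, ∀ w ∈ Λ, σ u = true → σ w = true → ¬ G.Adj u w

/-- An independent set `s` is compatible with the boundary condition `σ` on `Λ`: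
`σ⁻¹(1) ⊆ s` and `σ⁻¹(0) ∩ s = ∅`. -/
def Compat (Λ : Finset V) (σ : V → Bool) (s : Finset V) : Prop :=
  ∀ u ∈ Λ, (u ∈ s ↔ σ u = true)

/-- The conditional probability `Pr_μ[v ∈ I ∣ σ]` that `v` belongs to the random
independent set drawn from the hard-core measure at `lam`, conditioned on the
boundary condition `σ` on `Λ`. -/
def condProb [Fintype V] (G : SimpleGraph V) (lam : ℝ) (Λ : Finset V) (σ : V → Bool)
    (v : V) : ℝ :=
  (∑ s : Finset V, if IsInd G s ∧ Compat Λ σ s ∧ v ∈ s then lam ^ s.card else 0) /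
  (∑ s : Finset V, if IsInd G s ∧ Compat Λ σ s then lam ^ s.card else 0)

/-- The hard-core measure on `G` at activity `lam` satisfies the strong spatial mixing
bound with constant `C` and exponential rate `r`:  for every vertex `v`, every
`Λ ⊆ V ∖ {v}` and any two boundary conditions `σ, τ` on `Λ`,
`|Pr[v ∈ I ∣ σ] − Pr[v ∈ I ∣ τ]| ≤ C ⬝ r^{−d_G(v, σ ≠ τ)}`.
(The distance `d_G(v, σ ≠ τ)` is encoded by quantifying over all `d : ℕ` that are a
lower bound, in `ℕ∞`, for the distance from `v` to every vertex at which `σ, τ` differ.) -/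
def SSM [Fintype V] (G : SimpleGraph V) (lam : ℝ) (C r : ℝ) : Prop :=
  ∀ (v : V) (Λ : Finset V), v ∉ Λ → ∀ σ τ : V → Bool, IsBC G Λ σ → IsBC G Λ τ →
    ∀ d : ℕ, (∀ u ∈ Λ, σ u ≠ τ u → (d : ℕ∞) ≤ G.edist v u) →
      |condProb G lam Λ σ v - condProb G lam Λ τ v| ≤ C * r ^ (-(d : ℤ))

/-- `G` has maximum degree at most `Δ`. -/
def MaxDegLE [Fintype V] (G : SimpleGraph V) (Δ : ℕ) : Prop :=
  ∀ v : V, (univ.filter fun u => G.Adj v u).card ≤ Δ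

/-- The vertex set of the graph `G[σ]`, i.e. the vertices of `V ∖ Λ` that are not
adjacent to any vertex of `Λ` that is set to `1` by `σ`. -/
def goodSet [Fintype V] (G : SimpleGraph V) (Λ : Finset V) (σ : V → Bool) : Finset V :=
  (univ \ Λ).filter fun u => ∀ w ∈ Λ, σ w = true → ¬ G.Adj w u

end HardCore

namespace HardCore

/-- `G` is claw-free: it contains no induced `K_{1,3}`. -/
def ClawFree {V : Type*} (G : SimpleGraph V) : Prop :=
  ∀ v a b c : V, G.Adj v a → G.Adj v b → G.Adj v c → a ≠ b → a ≠ c → b ≠ c →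
    G.Adj a b ∨ G.Adj a c ∨ G.Adj b c

/-!
For `a ∉ W` let `P(W, a) = Z(W \ N(a)) / Z(W)` be the probability that no neighbour of `a` is
occupied in the hard-core model on `G[W]`. If the neighbours of `a` in `W` form a clique, at most
one of them is occupied, and so `P(W, a) = 1 / (1 + λ ∑ P(W \ N(a), u))`, the sum over
`u ∈ W ∩ N(a)`. Since `a` and two non-adjacent neighbours of `u` in `W \ N(a)` would be the leaves
of a claw centred at `u`, those neighbours form a clique as well, and the recursion continues. In
the coordinate `log P`, two of its steps contract by `κ = sup λΔ s (1 - s) / (1 + λΔ s)`, the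
supremum over `s ∈ [0, 1]`, and `κ ≤ r⁻²` as soon as `√(λΔ) (r - r⁻¹) ≤ 2`.

For an arbitrary vertex `v ∈ W`, let `U = W \ N[v]`. Then `Z(W) / Z(U)` is the sum of
`λ^|S| Z(U \ N(S)) / Z(U)` over the independent sets `S ⊆ W ∩ N[v]`. Claw-freeness gives
`|S| ≤ 2`, and each quotient factors into `|S|` terms `P(·, a)` with `a ∈ S`.
-/

section Development

open scoped Classical

variable {V R : Type*}

section IndependentSets

variable {G : SimpleGraph V} {s t A : Finset V}

theorem IsInd.mono (ht : IsInd G t) (hst : s ⊆ t) : IsInd G s :=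
  fun u hu w hw => ht u (hst hu) w (hst hw)

/-- The independent sets of the induced subgraph `G[A]`. -/
def indSubsets (G : SimpleGraph V) (A : Finset V) : Finset (Finset V) :=
  A.powerset.filter (IsInd G)

theorem mem_indSubsets : s ∈ indSubsets G A ↔ s ⊆ A ∧ IsInd G s := by
  simp only [indSubsets, mem_filter, mem_powerset]

theorem empty_mem_indSubsets : ∅ ∈ indSubsets G A :=
  mem_indSubsets.2 ⟨empty_subset A, by simp [IsInd]⟩

theorem indSubsets_of_isClique (hA : G.IsClique (A : Set V)) :
    indSubsets G A = insert ∅ (A.image singleton) := by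
  ext s
  simp only [mem_indSubsets, mem_insert, mem_image]
  constructor
  · rintro ⟨hsA, hs⟩
    refine s.eq_empty_or_nonempty.imp_right fun ⟨u, hu⟩ => ⟨u, hsA hu, ?_⟩
    refine (eq_singleton_iff_unique_mem.2 ⟨hu, fun w hw => ?_⟩).symm
    by_contra hwu
    exact hs w hw u hu (hA (hsA hw) (hsA hu) hwu)
  · rintro (rfl | ⟨u, hu, rfl⟩)
    · simp [IsInd]
    · simpa [IsInd] using hu

end IndependentSets

section PartitionFunction

variable [Fintype V] {G : SimpleGraph V} {A B N S W W' K L : Finset V} {a u : V}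

/-- The open neighbourhood `N(S)`: the vertices with a neighbour in `S`. -/
def nbhd (G : SimpleGraph V) (S : Finset V) : Finset V :=
  S.biUnion fun u => G.neighborFinset u

theorem mem_nbhd : u ∈ nbhd G S ↔ ∃ w ∈ S, G.Adj w u := by
  simp only [nbhd, mem_biUnion, SimpleGraph.mem_neighborFinset]

theorem mem_closedNbhd : u ∈ closedNbhd G a ↔ u = a ∨ G.Adj a u := by
  simp only [closedNbhd, mem_filter, mem_univ, true_and]

section Field

variable [Field R]

theorem Z_eq_sum_indSubsets (G : SimpleGraph V) (A : Finset V) (x : R) :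
    Z R G A x = ∑ s ∈ indSubsets G A, x ^ #s :=
  (sum_filter _ _).symm

theorem sum_indSubsets_inter_eq (x : R) (hNA : N ⊆ A) (hS : S ∈ indSubsets G N) :
    ∑ s ∈ indSubsets G A with s ∩ N = S, x ^ #s
      = x ^ #S * Z R G ((A \ N) \ nbhd G S) x := by
  obtain ⟨hSN, hSind⟩ := mem_indSubsets.1 hS
  rw [Z_eq_sum_indSubsets, mul_sum]
  refine sum_bij' (fun s _ => s \ N) (fun t _ => S ∪ t) ?_ ?_ ?_ ?_ ?_
  · simp only [mem_filter, mem_indSubsets]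
    rintro s ⟨⟨hsA, hs⟩, rfl⟩
    refine ⟨fun u hu => ?_, hs.mono sdiff_subset⟩
    have hu_far : u ∉ nbhd G (s ∩ N) := fun h => by
      obtain ⟨w, hw, hwu⟩ := mem_nbhd.1 h
      exact hs w (mem_inter.1 hw).1 u (mem_sdiff.1 hu).1 hwu
    exact mem_sdiff.2 ⟨sdiff_subset_sdiff hsA Subset.rfl hu, hu_far⟩
  · simp only [mem_filter, mem_indSubsets, subset_iff, mem_sdiff, mem_nbhd]
    rintro t ⟨htA, ht⟩
    refine ⟨⟨?_, ?_⟩, ?_⟩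
    · grind
    · intro u hu w hw
      have := SimpleGraph.adj_comm G u w
      grind [IsInd]
    · grind
  · grind
  · simp only [mem_indSubsets]
    grind
  · simp only [mem_filter]
    rintro s ⟨-, rfl⟩
    rw [← pow_add, card_inter_add_card_sdiff]

theorem Z_eq_sum_mul_Z_sdiff_nbhd (x : R) (hNA : N ⊆ A) :
    Z R G A x = ∑ S ∈ indSubsets G N, x ^ #S * Z R G ((A \ N) \ nbhd G S) x := by
  have hmaps : ∀ s ∈ indSubsets G A, s ∩ N ∈ indSubsets G N := fun s hs =>
    mem_indSubsets.2 ⟨inter_subset_right, (mem_indSubsets.1 hs).2.mono inter_subset_left⟩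
  rw [Z_eq_sum_indSubsets, ← sum_fiberwise_of_maps_to hmaps]
  exact sum_congr rfl fun S hS => sum_indSubsets_inter_eq x hNA hS

/-- The probability that the random independent set of the hard-core model on `G[W]` contains no
vertex of `K`. -/
def avoidProb (G : SimpleGraph V) (x : R) (W K : Finset V) : R :=
  Z R G (W \ K) x / Z R G W x

theorem inv_avoidProb (G : SimpleGraph V) (x : R) (W K : Finset V) :
    (avoidProb G x W K)⁻¹
      = ∑ S ∈ indSubsets G (W ∩ K), x ^ #S * avoidProb G x (W \ K) (nbhd G S) := by
  have hWK : W ∩ K ⊆ W := inter_subset_left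
  simp only [avoidProb, inv_div, Z_eq_sum_mul_Z_sdiff_nbhd x hWK, sdiff_inter_self_left, sum_div,
    mul_div_assoc]

end Field

section OrderedField

variable [Field R] [LinearOrder R] [IsStrictOrderedRing R] {x c : R}

theorem Z_pos (G : SimpleGraph V) (hx : 0 ≤ x) (A : Finset V) : 0 < Z R G A x := by
  rw [Z_eq_sum_indSubsets]
  exact sum_pos' (fun s _ => pow_nonneg hx _) ⟨∅, empty_mem_indSubsets, by simp⟩

theorem Z_mono (hx : 0 ≤ x) (hAB : A ⊆ B) : Z R G A x ≤ Z R G B x := by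
  simp only [Z_eq_sum_indSubsets]
  refine sum_le_sum_of_subset_of_nonneg (fun s hs => ?_) fun s _ _ => pow_nonneg hx _
  exact mem_indSubsets.2 ((mem_indSubsets.1 hs).imp_left hAB.trans')

theorem avoidProb_pos (G : SimpleGraph V) (hx : 0 ≤ x) (W K : Finset V) :
    0 < avoidProb G x W K :=
  div_pos (Z_pos G hx _) (Z_pos G hx _)

theorem avoidProb_le_one (G : SimpleGraph V) (hx : 0 ≤ x) (W K : Finset V) :
    avoidProb G x W K ≤ 1 :=
  div_le_one_of_le₀ (Z_mono hx sdiff_subset) (Z_pos G hx _).le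

theorem avoidProb_empty (G : SimpleGraph V) (hx : 0 ≤ x) (W : Finset V) :
    avoidProb G x W ∅ = 1 := by
  rw [avoidProb, sdiff_empty, div_self (Z_pos G hx W).ne']

theorem avoidProb_union (G : SimpleGraph V) (hx : 0 ≤ x) (W K L : Finset V) :
    avoidProb G x W (K ∪ L) = avoidProb G x W K * avoidProb G x (W \ K) L := by
  rw [avoidProb, avoidProb, avoidProb, sdiff_sdiff_left, sup_eq_union, mul_comm,
    div_mul_div_cancel₀ (Z_pos G hx (W \ K)).ne']

theorem inv_avoidProb_of_isClique (hx : 0 ≤ x) (hWK : G.IsClique ((W ∩ K : Finset V) : Set V)) :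
    (avoidProb G x W K)⁻¹
      = 1 + x * ∑ u ∈ W ∩ K, avoidProb G x (W \ K) (G.neighborFinset u) := by
  rw [inv_avoidProb, indSubsets_of_isClique hWK, sum_insert (by simp),
    sum_image singleton_injective.injOn, mul_sum]
  simp [nbhd, avoidProb_empty G hx]

theorem inv_avoidProb_le_of_isClique (hx : 0 ≤ x)
    (hWK : G.IsClique ((W ∩ K : Finset V) : Set V)) :
    (avoidProb G x W K)⁻¹ ≤ 1 + x * #(W ∩ K) := by
  rw [inv_avoidProb_of_isClique hx hWK]
  gcongr
  exact (sum_le_card_nsmul _ _ 1 fun u _ => avoidProb_le_one G hx _ _).trans_eq (by simp)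

theorem inv_avoidProb_sub_one_le (hx : 0 ≤ x) (hWW' : W ∩ K = W' ∩ K)
    (hK : G.IsClique ((W ∩ K : Finset V) : Set V))
    (h : ∀ w ∈ W ∩ K, avoidProb G x (W \ K) (G.neighborFinset w)
      ≤ c * avoidProb G x (W' \ K) (G.neighborFinset w)) :
    (avoidProb G x W K)⁻¹ - 1 ≤ c * ((avoidProb G x W' K)⁻¹ - 1) := by
  rw [inv_avoidProb_of_isClique hx hK, inv_avoidProb_of_isClique hx (hWW' ▸ hK), ← hWW',
    add_sub_cancel_left, add_sub_cancel_left, mul_left_comm c, mul_sum _ _ c]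
  gcongr with w hw
  exact h w hw

theorem inv_one_add_le_avoidProb (hx : 0 ≤ x)
    (h : (avoidProb G x W K)⁻¹ - 1 ≤ c) : (1 + c)⁻¹ ≤ avoidProb G x W K :=
  inv_le_of_inv_le₀ (avoidProb_pos G hx W K) (sub_le_iff_le_add'.1 h)

theorem avoidProb_le_mul_of_inv_le (hx : 0 ≤ x)
    (h : (avoidProb G x W' K)⁻¹ ≤ c * (avoidProb G x W K)⁻¹) :
    avoidProb G x W K ≤ c * avoidProb G x W' K := by
  have hW := avoidProb_pos G hx W K
  have hW' := avoidProb_pos G hx W' K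
  rwa [← div_eq_mul_inv, le_div_iff₀ hW, inv_mul_le_iff₀ hW', mul_comm] at h

end OrderedField

end PartitionFunction

section ClawFree

variable [Fintype V] {G : SimpleGraph V} {U W W' S : Finset V} {v a u : V} {Δ : ℕ}

/-- `a` is a vertex outside `W` which is simplicial in `G[W ∪ {a}]`. Claw-freeness makes this
property hereditary along the recursion for `avoidProb`. -/
def IsSimplicialOver (G : SimpleGraph V) (W : Finset V) (a : V) : Prop :=
  a ∉ W ∧ G.IsClique ((W ∩ G.neighborFinset a : Finset V) : Set V)

theorem MaxDegLE.card_inter_neighborFinset_le (hd : MaxDegLE G Δ) (W : Finset V) (a : V) :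
    #(W ∩ G.neighborFinset a) ≤ Δ := by
  refine (card_le_card inter_subset_right).trans ?_
  rw [SimpleGraph.neighborFinset_eq_filter]
  exact hd a

theorem avoidProb_le_mul_avoidProb [Field R] [LinearOrder R] [IsStrictOrderedRing R] {x : R}
    (hd : MaxDegLE G Δ) (hx : 0 ≤ x) (hW' : IsSimplicialOver G W' a) :
    avoidProb G x W (G.neighborFinset a)
      ≤ (1 + x * Δ) * avoidProb G x W' (G.neighborFinset a) := by
  have hlow : (avoidProb G x W' (G.neighborFinset a))⁻¹ ≤ 1 + x * Δ := by
    refine (inv_avoidProb_le_of_isClique hx hW'.2).trans ?_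
    gcongr
    exact hd.card_inter_neighborFinset_le W' a
  calc avoidProb G x W (G.neighborFinset a) ≤ 1 := avoidProb_le_one G hx _ _
    _ ≤ (1 + x * Δ) * avoidProb G x W' (G.neighborFinset a) :=
      (inv_le_iff_one_le_mul₀ (avoidProb_pos G hx _ _)).1 hlow

theorem ClawFree.isSimplicialOver (hG : ClawFree G) (hU : Disjoint U (closedNbhd G v))
    (ha : a ∈ closedNbhd G v) : IsSimplicialOver G U a := by
  refine ⟨disjoint_right.1 hU ha, fun z hz z' hz' hne => ?_⟩
  have far : ∀ w ∈ U, w ≠ v ∧ ¬ G.Adj v w := fun w hw => by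
    simpa only [mem_closedNbhd, not_or] using disjoint_left.1 hU hw
  simp only [coe_inter, Set.mem_inter_iff, mem_coe, SimpleGraph.mem_neighborFinset] at hz hz'
  obtain ⟨hzv, hvz⟩ := far z hz.1
  obtain ⟨hzv', hvz'⟩ := far z' hz'.1
  rcases mem_closedNbhd.1 ha with rfl | hva
  · exact absurd hz.2 hvz
  · have := hG a v z z' hva.symm hz.2 hz'.2 hzv.symm hzv'.symm hne
    tauto

theorem ClawFree.isSimplicialOver_sdiff (hG : ClawFree G) (ha : a ∉ W) (hau : G.Adj a u) :
    IsSimplicialOver G (W \ G.neighborFinset a) u := by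
  refine hG.isSimplicialOver (v := a) (disjoint_left.2 fun w hw hwa => ?_)
    (mem_closedNbhd.2 (Or.inr hau))
  obtain ⟨hwW, hw⟩ := mem_sdiff.1 hw
  rcases mem_closedNbhd.1 hwa with rfl | h
  · exact ha hwW
  · exact hw ((G.mem_neighborFinset a w).2 h)

theorem ClawFree.card_le_two (hG : ClawFree G) (hS : S ∈ indSubsets G (closedNbhd G v)) :
    #S ≤ 2 := by
  obtain ⟨hSv, hind⟩ := mem_indSubsets.1 hS
  by_contra! hcard
  obtain ⟨a, ha, b, hb, c, hc, hab, hac, hbc⟩ := two_lt_card.1 hcard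
  have adj_center : ∀ z ∈ S, ∀ w ∈ S, w ≠ z → G.Adj v z := fun z hz w hw hwz => by
    rcases mem_closedNbhd.1 (hSv hz) with rfl | h
    · exact absurd ((mem_closedNbhd.1 (hSv hw)).resolve_left hwz) (hind z hz w hw)
    · exact h
  rcases hG v a b c (adj_center a ha b hb hab.symm) (adj_center b hb a ha hab)
    (adj_center c hc a ha hac) hab hac hbc with h | h | h
  · exact hind a ha b hb h
  · exact hind a ha c hc h
  · exact hind b hb c hc h

end ClawFree

section ContractionFactor

variable {y κ t A : ℝ}

/-- `κ` bounds `y s (1 - s) / (1 + y s)` on `[0, 1]`. For `y = λΔ` this quantity controls the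
derivative of two steps of the recursion for `avoidProb` in the coordinate `log avoidProb`. -/
def IsContractionFactor (y κ : ℝ) : Prop :=
  ∀ s ∈ Set.Icc (0 : ℝ) 1, y * s * (1 - s) ≤ κ * (1 + y * s)

theorem IsContractionFactor.nonneg (hκ : IsContractionFactor y κ) : 0 ≤ κ := by
  simpa using hκ 0 (by simp)

theorem isContractionFactor_inv_sq {r : ℝ} (hy : 0 ≤ y) (hr : 0 < r)
    (hrate : √y * (r - r⁻¹) ≤ 2) : IsContractionFactor y (r⁻¹ ^ 2) := by
  rintro s ⟨hs, -⟩
  have hsq : √y ^ 2 = y := Real.sq_sqrt hy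
  have hlin : √y * (1 - r⁻¹ ^ 2) ≤ 2 * r⁻¹ := by
    calc √y * (1 - r⁻¹ ^ 2) = √y * (r - r⁻¹) * r⁻¹ := by field_simp
      _ ≤ 2 * r⁻¹ := by gcongr
  have hcross : √y * s * (√y * (1 - r⁻¹ ^ 2)) ≤ √y * s * (2 * r⁻¹) := by gcongr
  have hgap : r⁻¹ ^ 2 * (1 + y * s) - y * s * (1 - s)
      = (r⁻¹ - √y * s) ^ 2 + (√y * s * (2 * r⁻¹) - √y * s * (√y * (1 - r⁻¹ ^ 2))) := by
    linear_combination (1 - r⁻¹ ^ 2 - s) * s * hsq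
  nlinarith [sq_nonneg (r⁻¹ - √y * s)]

theorem hasDerivAt_inv_one_add_exp_mul (hA : 0 ≤ A) (t : ℝ) :
    HasDerivAt (fun t => (1 + Real.exp t * A)⁻¹)
      (-((1 + Real.exp t * A)⁻¹ * (1 - (1 + Real.exp t * A)⁻¹))) t := by
  have hpos : 0 < 1 + Real.exp t * A := by positivity
  refine ((((Real.hasDerivAt_exp t).mul_const A).const_add 1).fun_inv hpos.ne').congr_deriv ?_
  field_simp
  ring

theorem IsContractionFactor.one_add_mul_inv_le (hκ : IsContractionFactor y κ) (hA : 0 ≤ A)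
    (ht : 0 ≤ t) :
    1 + y * (1 + A)⁻¹ ≤ Real.exp (κ * t) * (1 + y * (1 + Real.exp t * A)⁻¹) := by
  let s : ℝ → ℝ := fun t => (1 + Real.exp t * A)⁻¹
  have hderiv : ∀ t, HasDerivAt (fun t => Real.exp (κ * t) * (1 + y * s t))
      (Real.exp (κ * t) * (κ * (1 + y * s t) - y * s t * (1 - s t))) t := fun t => by
    have hexp : HasDerivAt (fun t => Real.exp (κ * t)) (Real.exp (κ * t) * κ) t := by
      simpa using ((hasDerivAt_id t).const_mul κ).exp
    have hinv := ((hasDerivAt_inv_one_add_exp_mul hA t).const_mul y).const_add 1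
    exact (hexp.fun_mul hinv).congr_deriv (by ring)
  have hs : ∀ t, s t ∈ Set.Icc (0 : ℝ) 1 := fun t =>
    ⟨by positivity, inv_le_one_of_one_le₀ (le_add_of_nonneg_right (by positivity))⟩
  have hmono : Monotone fun t => Real.exp (κ * t) * (1 + y * s t) :=
    monotone_of_hasDerivAt_nonneg hderiv fun t =>
      mul_nonneg (Real.exp_pos _).le (sub_nonneg.2 (hκ _ (hs t)))
  simpa [s] using hmono ht

theorem IsContractionFactor.one_add_mul_sum_inv_le {ι : Type*} {K : Finset ι} {n : ℕ} {x : ℝ}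
    (hκ : IsContractionFactor (x * n) κ) (hK : #K ≤ n) (ht : 0 ≤ t) {A : ι → ℝ}
    (hA : ∀ u ∈ K, 0 ≤ A u) :
    1 + x * ∑ u ∈ K, (1 + A u)⁻¹
      ≤ Real.exp (κ * t) * (1 + x * ∑ u ∈ K, (1 + Real.exp t * A u)⁻¹) := by
  have hE : 1 ≤ Real.exp (κ * t) := Real.one_le_exp (mul_nonneg hκ.nonneg ht)
  rcases K.eq_empty_or_nonempty with rfl | hne
  · simpa using hE
  have hn : (0 : ℝ) < n := by exact_mod_cast hne.card_pos.trans_le hK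
  have hKn : (#K : ℝ) ≤ n := by exact_mod_cast hK
  have hsplit : ∀ f : ι → ℝ,
      n * (1 + x * ∑ u ∈ K, f u) = (n - #K) + ∑ u ∈ K, (1 + x * n * f u) := fun f => by
    rw [sum_add_distrib, ← mul_sum, sum_const, nsmul_one]
    ring
  refine le_of_mul_le_mul_left ?_ hn
  calc n * (1 + x * ∑ u ∈ K, (1 + A u)⁻¹)
      = (n - #K) + ∑ u ∈ K, (1 + x * n * (1 + A u)⁻¹) := hsplit _
    _ ≤ Real.exp (κ * t) * (n - #K)
        + ∑ u ∈ K, Real.exp (κ * t) * (1 + x * n * (1 + Real.exp t * A u)⁻¹) :=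
      add_le_add (le_mul_of_one_le_left (sub_nonneg.2 hKn) hE)
        (sum_le_sum fun u hu => hκ.one_add_mul_inv_le (hA u hu) ht)
    _ = Real.exp (κ * t) * (n * (1 + x * ∑ u ∈ K, (1 + Real.exp t * A u)⁻¹)) := by
      rw [hsplit, ← mul_sum, mul_add]
    _ = n * (Real.exp (κ * t) * (1 + x * ∑ u ∈ K, (1 + Real.exp t * A u)⁻¹)) :=
      mul_left_comm _ _ _

end ContractionFactor

section Agreement

variable {G : SimpleGraph V} {v a u : V} {D : ℕ} {W W' : Finset V}

/-- `W` and `W'` coincide on the ball of radius `D` around `v`. -/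
def AgreeNear (G : SimpleGraph V) (v : V) (D : ℕ) (W W' : Finset V) : Prop :=
  ∀ u, G.edist v u ≤ D → (u ∈ W ↔ u ∈ W')

theorem AgreeNear.symm (h : AgreeNear G v D W W') : AgreeNear G v D W' W :=
  fun u hu => (h u hu).symm

theorem AgreeNear.mono (h : AgreeNear G v D W W') {E : ℕ} (hE : E ≤ D) : AgreeNear G v E W W' :=
  fun u hu => h u (hu.trans (by exact_mod_cast hE))

theorem AgreeNear.sdiff (h : AgreeNear G v D W W') (K : Finset V) :
    AgreeNear G v D (W \ K) (W' \ K) :=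
  fun u hu => by simp only [mem_sdiff, h u hu]

theorem AgreeNear.mem_iff (h : AgreeNear G v D W W') : v ∈ W ↔ v ∈ W' :=
  h v (by simp)

theorem edist_le_succ_of_adj (hau : G.edist a u ≤ D) (hva : G.Adj v a) :
    G.edist v u ≤ (D + 1 : ℕ) := by
  calc G.edist v u ≤ G.edist v a + G.edist a u := SimpleGraph.edist_triangle
    _ ≤ 1 + D := by gcongr; exact (SimpleGraph.edist_eq_one_iff_adj.2 hva).le
    _ = (D + 1 : ℕ) := by push_cast; exact add_comm _ _

theorem AgreeNear.of_adj (h : AgreeNear G v (D + 1) W W') (hva : G.Adj v a) :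
    AgreeNear G a D W W' :=
  fun u hu => h u (edist_le_succ_of_adj hu hva)

variable [Fintype V]

theorem AgreeNear.of_mem_closedNbhd (h : AgreeNear G v (D + 1) W W')
    (ha : a ∈ closedNbhd G v) : AgreeNear G a D W W' := by
  rcases mem_closedNbhd.1 ha with rfl | hva
  · exact h.mono D.le_succ
  · exact h.of_adj hva

theorem AgreeNear.inter_closedNbhd (h : AgreeNear G v (D + 1) W W') :
    W ∩ closedNbhd G v = W' ∩ closedNbhd G v := by
  ext u
  simp only [mem_inter, and_congr_left_iff]
  exact fun hu => (h.of_mem_closedNbhd hu).mem_iff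

theorem AgreeNear.inter_neighborFinset (h : AgreeNear G v (D + 1) W W') :
    W ∩ G.neighborFinset v = W' ∩ G.neighborFinset v := by
  ext u
  simp only [mem_inter, SimpleGraph.mem_neighborFinset, and_congr_left_iff]
  exact fun hu => (h.of_adj hu).mem_iff

theorem agreeNear_goodSet {Λ : Finset V} {σ τ : V → Bool}
    (h : ∀ u ∈ Λ, σ u ≠ τ u → ((D + 2 : ℕ) : ℕ∞) ≤ G.edist v u) :
    AgreeNear G v D (goodSet G Λ σ) (goodSet G Λ τ) := by
  intro u hu
  have hστ : ∀ w ∈ Λ, G.Adj w u → σ w = τ w := fun w hw hwu => by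
    by_contra hne
    have hvw : G.edist v w ≤ (D + 1 : ℕ) := by
      rw [SimpleGraph.edist_comm] at hu ⊢
      exact edist_le_succ_of_adj hu hwu
    have : D + 2 ≤ D + 1 := by exact_mod_cast (h w hw hne).trans hvw
    omega
  simp only [goodSet, mem_filter]
  grind

end Agreement

section Contraction

variable [Fintype V] {G : SimpleGraph V} {U U' W W' S : Finset V} {v a : V} {x κ t : ℝ} {Δ : ℕ}

theorem log_one_add_mul_natCast_nonneg (hx : 0 ≤ x) (n : ℕ) : 0 ≤ Real.log (1 + x * n) :=
  Real.log_nonneg (le_add_of_nonneg_right (by positivity))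

/-- Two steps are taken at once because a single step of the recursion reverses inequalities. -/
theorem ClawFree.avoidProb_le_exp_mul_of_two_steps (hG : ClawFree G) (hd : MaxDegLE G Δ)
    (hx : 0 ≤ x) (hκ : IsContractionFactor (x * Δ) κ) (ht : 0 ≤ t)
    (hW : IsSimplicialOver G W a) (hW' : IsSimplicialOver G W' a) (hWW' : AgreeNear G a 2 W W')
    (h : ∀ u w, G.Adj a u → G.Adj u w →
      avoidProb G x ((W \ G.neighborFinset a) \ G.neighborFinset u) (G.neighborFinset w) ≤
        Real.exp t *
          avoidProb G x ((W' \ G.neighborFinset a) \ G.neighborFinset u) (G.neighborFinset w)) :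
    avoidProb G x W (G.neighborFinset a)
      ≤ Real.exp (κ * t) * avoidProb G x W' (G.neighborFinset a) := by
  set N := G.neighborFinset a
  let P (u : V) : ℝ := avoidProb G x (W \ N) (G.neighborFinset u)
  let A (u : V) : ℝ := (avoidProb G x (W' \ N) (G.neighborFinset u))⁻¹ - 1
  have hA : ∀ u, 0 ≤ A u := fun u => sub_nonneg.2 <|
    (one_le_inv₀ (avoidProb_pos G hx _ _)).2 (avoidProb_le_one G hx _ _)
  have hPA : ∀ u ∈ W ∩ N, (1 + Real.exp t * A u)⁻¹ ≤ P u := fun u hu => by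
    have hau : G.Adj a u := (G.mem_neighborFinset a u).1 (mem_inter.1 hu).2
    exact inv_one_add_le_avoidProb hx <| inv_avoidProb_sub_one_le hx
      ((hWW'.of_adj hau).sdiff N).inter_neighborFinset (hG.isSimplicialOver_sdiff hW.1 hau).2
      fun w hw => h u w hau ((G.mem_neighborFinset u w).1 (mem_inter.1 hw).2)
  have hsame : W ∩ N = W' ∩ N := hWW'.inter_neighborFinset
  refine avoidProb_le_mul_of_inv_le hx ?_
  calc (avoidProb G x W' N)⁻¹
      = 1 + x * ∑ u ∈ W ∩ N, (1 + A u)⁻¹ := by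
        rw [inv_avoidProb_of_isClique hx hW'.2, ← hsame]
        simp only [N, A, add_sub_cancel, inv_inv]
    _ ≤ Real.exp (κ * t) * (1 + x * ∑ u ∈ W ∩ N, (1 + Real.exp t * A u)⁻¹) :=
        hκ.one_add_mul_sum_inv_le (hd.card_inter_neighborFinset_le W a) ht fun u _ => hA u
    _ ≤ Real.exp (κ * t) * (1 + x * ∑ u ∈ W ∩ N, P u) := by
        gcongr with u hu
        exact hPA u hu
    _ = Real.exp (κ * t) * (avoidProb G x W N)⁻¹ := by
        rw [inv_avoidProb_of_isClique hx hW.2]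

theorem ClawFree.avoidProb_neighborFinset_le (hG : ClawFree G) (hd : MaxDegLE G Δ) (hx : 0 ≤ x)
    (hκ : IsContractionFactor (x * Δ) κ) (m : ℕ) (hW : IsSimplicialOver G W a)
    (hW' : IsSimplicialOver G W' a) (hWW' : AgreeNear G a (2 * m) W W') :
    avoidProb G x W (G.neighborFinset a)
      ≤ Real.exp (κ ^ m * Real.log (1 + x * Δ)) * avoidProb G x W' (G.neighborFinset a) := by
  induction m generalizing W W' a with
  | zero =>
    have hpos : 0 < 1 + x * Δ := by positivity
    rw [pow_zero, one_mul, Real.exp_log hpos]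
    exact avoidProb_le_mul_avoidProb hd hx hW'
  | succ m ih =>
    have ht : 0 ≤ κ ^ m * Real.log (1 + x * Δ) :=
      mul_nonneg (pow_nonneg hκ.nonneg m) (log_one_add_mul_natCast_nonneg hx Δ)
    rw [pow_succ', mul_assoc]
    refine hG.avoidProb_le_exp_mul_of_two_steps hd hx hκ ht hW hW' (hWW'.mono (by omega))
      fun u w hau huw => ?_
    have hu := hG.isSimplicialOver_sdiff hW.1 hau
    have hu' := hG.isSimplicialOver_sdiff hW'.1 hau
    exact ih (hG.isSimplicialOver_sdiff hu.1 huw) (hG.isSimplicialOver_sdiff hu'.1 huw)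
      (((hWW'.of_adj hau).of_adj huw).sdiff _ |>.sdiff _)

theorem ClawFree.avoidProb_nbhd_le (hG : ClawFree G) (hd : MaxDegLE G Δ) (hx : 0 ≤ x)
    (hκ : IsContractionFactor (x * Δ) κ) (m : ℕ) (hS : S ⊆ closedNbhd G v)
    (hU : Disjoint U (closedNbhd G v)) (hU' : Disjoint U' (closedNbhd G v))
    (hUU' : AgreeNear G v (2 * m + 1) U U') :
    avoidProb G x U (nbhd G S)
      ≤ Real.exp (#S * (κ ^ m * Real.log (1 + x * Δ))) * avoidProb G x U' (nbhd G S) := by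
  induction S using Finset.induction_on generalizing U U' with
  | empty => simp [nbhd, avoidProb_empty G hx]
  | insert a S haS ih =>
    obtain ⟨ha, hS⟩ := insert_subset_iff.1 hS
    have hfirst := hG.avoidProb_neighborFinset_le hd hx hκ m (hG.isSimplicialOver hU ha)
      (hG.isSimplicialOver hU' ha) (hUU'.of_mem_closedNbhd ha)
    have hrest := ih hS (hU.mono_left (sdiff_subset (t := G.neighborFinset a)))
      (hU'.mono_left (sdiff_subset (t := G.neighborFinset a))) (hUU'.sdiff _)
    have hsplit : nbhd G (insert a S) = G.neighborFinset a ∪ nbhd G S := biUnion_insert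
    rw [hsplit, avoidProb_union G hx, avoidProb_union G hx, card_insert_of_notMem haS,
      Nat.cast_succ, add_one_mul, add_comm, Real.exp_add, mul_mul_mul_comm]
    exact mul_le_mul hfirst hrest (avoidProb_pos G hx _ _).le
      (mul_nonneg (Real.exp_pos _).le (avoidProb_pos G hx _ _).le)

theorem ClawFree.avoidProb_closedNbhd_le (hG : ClawFree G) (hd : MaxDegLE G Δ) (hx : 0 ≤ x)
    (hκ : IsContractionFactor (x * Δ) κ) (m : ℕ) (hWW' : AgreeNear G v (2 * m + 1) W W') :
    avoidProb G x W (closedNbhd G v)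
      ≤ Real.exp (2 * (κ ^ m * Real.log (1 + x * Δ))) * avoidProb G x W' (closedNbhd G v) := by
  have ht : 0 ≤ κ ^ m * Real.log (1 + x * Δ) :=
    mul_nonneg (pow_nonneg hκ.nonneg m) (log_one_add_mul_natCast_nonneg hx Δ)
  refine avoidProb_le_mul_of_inv_le hx ?_
  rw [inv_avoidProb, inv_avoidProb, hWW'.inter_closedNbhd, mul_sum]
  refine sum_le_sum fun S hS => ?_
  obtain ⟨hSv, hind⟩ := mem_indSubsets.1 hS
  replace hSv : S ⊆ closedNbhd G v := hSv.trans inter_subset_right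
  have hcard : (#S : ℝ) ≤ 2 := by exact_mod_cast hG.card_le_two (mem_indSubsets.2 ⟨hSv, hind⟩)
  rw [mul_left_comm]
  refine mul_le_mul_of_nonneg_left ?_ (pow_nonneg hx _)
  calc avoidProb G x (W' \ closedNbhd G v) (nbhd G S)
      ≤ Real.exp (#S * (κ ^ m * Real.log (1 + x * Δ)))
          * avoidProb G x (W \ closedNbhd G v) (nbhd G S) :=
        hG.avoidProb_nbhd_le hd hx hκ m hSv sdiff_disjoint sdiff_disjoint (hWW'.symm.sdiff _)
    _ ≤ Real.exp (2 * (κ ^ m * Real.log (1 + x * Δ)))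
          * avoidProb G x (W \ closedNbhd G v) (nbhd G S) := by
        have := (avoidProb_pos G hx (W \ closedNbhd G v) (nbhd G S)).le
        gcongr

end Contraction

section ConditionalProbability

variable {G : SimpleGraph V} {Λ s : Finset V} {σ τ : V → Bool} {v : V} {x κ : ℝ} {Δ : ℕ}

theorem compat_iff_inter_eq : Compat Λ σ s ↔ s ∩ Λ = {u ∈ Λ | σ u = true} := by
  simp only [Compat, Finset.ext_iff, mem_inter, mem_filter]
  exact forall_congr' fun u => by tauto

theorem compat_insert_update_iff (hv : v ∉ Λ) :
    Compat (insert v Λ) (Function.update σ v true) s ↔ Compat Λ σ s ∧ v ∈ s := by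
  have hne : ∀ u ∈ Λ, Function.update σ v true u = σ u := fun u hu =>
    Function.update_of_ne (ne_of_mem_of_not_mem hu hv) _ _
  simp +contextual [Compat, hne, and_comm]

variable [Fintype V]

theorem sum_compat_eq [Field R] (x : R) (hσ : IsBC G Λ σ) :
    (∑ s : Finset V, if IsInd G s ∧ Compat Λ σ s then x ^ #s else 0)
      = x ^ #{u ∈ Λ | σ u = true} * Z R G (goodSet G Λ σ) x := by
  have hones : {u ∈ Λ | σ u = true} ∈ indSubsets G Λ := by
    refine mem_indSubsets.2 ⟨filter_subset _ _, fun u hu w hw => ?_⟩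
    rw [mem_filter] at hu hw
    exact hσ u hu.1 w hw.1 hu.2 hw.2
  have hgood : (univ \ Λ) \ nbhd G {u ∈ Λ | σ u = true} = goodSet G Λ σ := by
    ext u
    simp only [goodSet, mem_sdiff, mem_filter, mem_nbhd, not_exists, not_and, and_imp]
  rw [← hgood, ← sum_indSubsets_inter_eq x (subset_univ Λ) hones, ← sum_filter]
  refine sum_congr ?_ fun _ _ => rfl
  ext s
  simp only [mem_filter, mem_univ, true_and, mem_indSubsets, subset_univ, compat_iff_inter_eq]

theorem goodSet_insert_update :
    goodSet G (insert v Λ) (Function.update σ v true) = goodSet G Λ σ \ closedNbhd G v := by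
  ext u
  simp only [goodSet, mem_filter, mem_sdiff, mem_closedNbhd, Function.update_apply]
  grind

theorem isBC_insert_update (hσ : IsBC G Λ σ) (hv : v ∈ goodSet G Λ σ) :
    IsBC G (insert v Λ) (Function.update σ v true) := by
  have hgood := (mem_filter.1 hv).2
  intro u hu w hw hσu hσw hadj
  have hadj' := hadj.symm
  have hirrefl := G.loopless.irrefl
  simp only [Function.update_apply] at hσu hσw
  grind [IsBC]

theorem condProb_eq_ratio (hx : x ≠ 0) (hσ : IsBC G Λ σ) (hv : v ∈ goodSet G Λ σ) :
    condProb G x Λ σ v = ratio G (goodSet G Λ σ) v x := by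
  have hvΛ : v ∉ Λ := (mem_sdiff.1 (mem_filter.1 hv).1).2
  have hones : #{u ∈ insert v Λ | Function.update σ v true u = true}
      = #{u ∈ Λ | σ u = true} + 1 := by
    rw [filter_insert, if_pos (by simp), card_insert_of_notMem (by simp [hvΛ])]
    congr 2
    exact filter_congr fun u hu => by
      rw [Function.update_of_ne (ne_of_mem_of_not_mem hu hvΛ)]
  simp only [condProb, ← compat_insert_update_iff hvΛ, sum_compat_eq x hσ,
    sum_compat_eq x (isBC_insert_update hσ hv), goodSet_insert_update, hones, pow_succ,
    mul_assoc, ratio]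
  exact mul_div_mul_left _ _ (pow_ne_zero _ hx)

theorem condProb_eq_zero (x : ℝ) (hvΛ : v ∉ Λ) (hv : v ∉ goodSet G Λ σ) :
    condProb G x Λ σ v = 0 := by
  obtain ⟨w, hwΛ, hσw, hwv⟩ : ∃ w ∈ Λ, σ w = true ∧ G.Adj w v := by
    simpa [goodSet, hvΛ] using hv
  rw [condProb, sum_eq_zero, zero_div]
  exact fun s _ => if_neg fun ⟨hs, hσs, hvs⟩ => hs w ((hσs w hwΛ).2 hσw) v hvs hwv

theorem condProb_mem_Icc (G : SimpleGraph V) (hx : 0 ≤ x) (Λ : Finset V) (σ : V → Bool) (v : V) :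
    condProb G x Λ σ v ∈ Set.Icc (0 : ℝ) 1 := by
  have hnum : 0 ≤ ∑ s : Finset V, if IsInd G s ∧ Compat Λ σ s ∧ v ∈ s then x ^ #s else 0 :=
    sum_nonneg fun s _ => by positivity
  have hle : (∑ s : Finset V, if IsInd G s ∧ Compat Λ σ s ∧ v ∈ s then x ^ #s else 0)
      ≤ ∑ s : Finset V, if IsInd G s ∧ Compat Λ σ s then x ^ #s else 0 := by
    simp only [← sum_filter]
    refine sum_le_sum_of_subset_of_nonneg (fun s hs => ?_) fun s _ _ => pow_nonneg hx _
    simp only [mem_filter] at hs ⊢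
    tauto
  exact ⟨div_nonneg hnum (hnum.trans hle), div_le_one_of_le₀ hle (hnum.trans hle)⟩

theorem sub_le_of_le_exp_mul {p q t : ℝ} (hp : p ∈ Set.Icc (0 : ℝ) 1) (ht : 0 ≤ t)
    (h : p ≤ Real.exp t * q) : p - q ≤ t := by
  have hq : Real.exp (-t) * p ≤ q := by rwa [Real.exp_neg, inv_mul_le_iff₀ (Real.exp_pos t)]
  have hexp : (1 - t) * p ≤ Real.exp (-t) * p :=
    mul_le_mul_of_nonneg_right (Real.one_sub_le_exp_neg t) hp.1
  linarith [mul_le_of_le_one_right ht hp.2]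

theorem ClawFree.condProb_sub_le (hG : ClawFree G) (hd : MaxDegLE G Δ) (hx : 0 < x)
    (hκ : IsContractionFactor (x * Δ) κ) (m : ℕ) (hvΛ : v ∉ Λ) (hσ : IsBC G Λ σ)
    (hτ : IsBC G Λ τ) (hστ : AgreeNear G v (2 * m + 1) (goodSet G Λ σ) (goodSet G Λ τ)) :
    condProb G x Λ σ v - condProb G x Λ τ v ≤ 2 * (κ ^ m * Real.log (1 + x * Δ)) := by
  have ht : 0 ≤ 2 * (κ ^ m * Real.log (1 + x * Δ)) :=
    mul_nonneg zero_le_two <|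
      mul_nonneg (pow_nonneg hκ.nonneg m) (log_one_add_mul_natCast_nonneg hx.le Δ)
  by_cases hv : v ∈ goodSet G Λ σ
  · refine sub_le_of_le_exp_mul (condProb_mem_Icc G hx.le Λ σ v) ht ?_
    rw [condProb_eq_ratio hx.ne' hσ hv, condProb_eq_ratio hx.ne' hτ (hστ.mem_iff.1 hv), ratio,
      ratio, mul_div_assoc, mul_div_assoc, mul_left_comm]
    exact mul_le_mul_of_nonneg_left (hG.avoidProb_closedNbhd_le hd hx.le hκ m hστ) hx.le
  · rwa [condProb_eq_zero x hvΛ hv, condProb_eq_zero x hvΛ (mt hστ.mem_iff.2 hv), sub_zero]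

theorem ClawFree.abs_condProb_sub_le (hG : ClawFree G) (hd : MaxDegLE G Δ) (hx : 0 < x)
    (hκ : IsContractionFactor (x * Δ) κ) (m : ℕ) (hvΛ : v ∉ Λ) (hσ : IsBC G Λ σ)
    (hτ : IsBC G Λ τ)
    (hστ : ∀ u ∈ Λ, σ u ≠ τ u → ((2 * m + 3 : ℕ) : ℕ∞) ≤ G.edist v u) :
    |condProb G x Λ σ v - condProb G x Λ τ v| ≤ 2 * (κ ^ m * Real.log (1 + x * Δ)) := by
  have hagree := agreeNear_goodSet (D := 2 * m + 1) hστ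
  exact abs_sub_le_iff.2 ⟨hG.condProb_sub_le hd hx hκ m hvΛ hσ hτ hagree,
    hG.condProb_sub_le hd hx hκ m hvΛ hτ hσ hagree.symm⟩

end ConditionalProbability

section Rate

theorem inv_pow_le_pow_mul_zpow_neg [Field R] [LinearOrder R] [IsStrictOrderedRing R] {r : R}
    (hr : 1 ≤ r) {k d j : ℕ} (h : d ≤ k + j) :
    r⁻¹ ^ k ≤ r ^ j * r ^ (-(d : ℤ)) := by
  have hr0 : r ≠ 0 := (one_pos.trans_le hr).ne'
  rw [← zpow_natCast, ← zpow_natCast, inv_zpow', ← zpow_add₀ hr0]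
  exact zpow_le_zpow_right₀ hr (by omega)

theorem sqrt_mul_sub_inv_le_two {l n δ : ℝ} (hl : 0 < l) (hδ : 0 ≤ δ) (h : δ * n ≤ 1) :
    √(l * n) * ((1 + √(δ / l)) - (1 + √(δ / l))⁻¹) ≤ 2 := by
  set p := √(δ / l) with hp
  have hp0 : 0 ≤ p := Real.sqrt_nonneg _
  have hprod : √(l * n) * p ≤ 1 := by
    rw [hp, ← Real.sqrt_mul' _ (by positivity), Real.sqrt_le_one]
    calc l * n * (δ / l) = δ * n := by field_simp
      _ ≤ 1 := h
  have hinv : 1 - p ≤ (1 + p)⁻¹ := by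
    rw [← one_div, le_div_iff₀ (by positivity)]
    nlinarith
  calc √(l * n) * ((1 + p) - (1 + p)⁻¹) ≤ √(l * n) * (2 * p) := by
        gcongr
        linarith
    _ ≤ 2 := by linarith

theorem mul_lt_one_of_lt_one_div_exp_mul {n δ : ℝ} (hn : 0 < n)
    (h : δ < 1 / (Real.exp 1 * n)) : δ * n < 1 := by
  have hen : n ≤ Real.exp 1 * n := le_mul_of_one_le_left hn.le (Real.one_le_exp zero_le_one)
  exact (lt_div_iff₀ hn).1 (h.trans_le (one_div_le_one_div_of_le hn hen))

end Rate

/-- The largest `r` allowed by `hrate` is `(1 + √(1 + λΔ)) / √(λΔ)`. -/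
theorem SSM_clawfree_general {V : Type*} [Fintype V] {G : SimpleGraph V} {Δ : ℕ} {lam r : ℝ}
    (hG : ClawFree G) (hd : MaxDegLE G Δ) (hlam : 0 < lam) (hr : 1 ≤ r)
    (hrate : √(lam * Δ) * (r - r⁻¹) ≤ 2) :
    SSM G lam (r ^ 4 * (1 + 2 * Real.log (1 + lam * Δ))) r := by
  intro v Λ hv σ τ hσ hτ d hdist
  set L := Real.log (1 + lam * Δ)
  have hL : 0 ≤ L := log_one_add_mul_natCast_nonneg hlam.le Δ
  have hκ : IsContractionFactor (lam * Δ) (r⁻¹ ^ 2) :=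
    isContractionFactor_inv_sq (by positivity) (by positivity) hrate
  rw [mul_right_comm]
  rcases lt_or_ge d 3 with hd3 | hd3
  · have hone : 1 ≤ r ^ 4 * r ^ (-(d : ℤ)) := by
      simpa using inv_pow_le_pow_mul_zpow_neg hr (k := 0) (d := d) (j := 4) (by omega)
    have habs : |condProb G lam Λ σ v - condProb G lam Λ τ v| ≤ 1 :=
      Real.dist_le_of_mem_Icc_01 (condProb_mem_Icc G hlam.le Λ σ v)
        (condProb_mem_Icc G hlam.le Λ τ v)
    nlinarith
  · obtain ⟨m, hmd, hdm⟩ : ∃ m, 2 * m + 3 ≤ d ∧ d ≤ 2 * m + 4 := ⟨(d - 3) / 2, by omega⟩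
    have hfar : ∀ u ∈ Λ, σ u ≠ τ u → ((2 * m + 3 : ℕ) : ℕ∞) ≤ G.edist v u := fun u hu hne =>
      le_trans (by exact_mod_cast hmd) (hdist u hu hne)
    calc |condProb G lam Λ σ v - condProb G lam Λ τ v| ≤ 2 * ((r⁻¹ ^ 2) ^ m * L) :=
          hG.abs_condProb_sub_le hd hlam hκ m hv hσ hτ hfar
      _ = r⁻¹ ^ (2 * m) * (2 * L) := by rw [← pow_mul]; ring
      _ ≤ r ^ 4 * r ^ (-(d : ℤ)) * (1 + 2 * L) :=
          mul_le_mul (inv_pow_le_pow_mul_zpow_neg hr hdm) (by linarith) (by positivity)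
            (by positivity)

end Development

/-- Let `Δ ≥ 2` and let `𝒢` be the family of all claw-free graphs of
maximum degree at most `Δ`.  For every `λ > 0` and every `δ` with `0 < δ < 1/(eΔ)` there is
a constant `C > 0` such that the hard-core measure at `λ` satisfies strong spatial mixing
on `𝒢` with exponential rate `r = 1 + √(δ/λ)` and constant `C`. -/
theorem SSM_clawfree
    (Δ : ℕ) (hΔ : 2 ≤ Δ)
    (lam : ℝ) (hlam : 0 < lam)
    (δ : ℝ) (hδ0 : 0 < δ) (hδ1 : δ < 1 / (Real.exp 1 * Δ)) :
    ∃ C > 0, ∀ (V : Type) (_ : Fintype V) (G : SimpleGraph V),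
      ClawFree G → MaxDegLE G Δ → SSM G lam C (1 + Real.sqrt (δ / lam)) := by
  have hlog := log_one_add_mul_natCast_nonneg hlam.le Δ
  exact ⟨_, by positivity, fun V _ G hG hd => SSM_clawfree_general hG hd hlam
    (le_add_of_nonneg_right (Real.sqrt_nonneg _)) (sqrt_mul_sub_inv_le_two hlam hδ0.le
      (mul_lt_one_of_lt_one_div_exp_mul (by positivity) hδ1).le)⟩

end HardCore

end
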